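/- arXiv:1603.04140 — 3 statements merged into one kernel-verified Lean document; each statement's English description precedes it below -/
import Mathlib

section
/- Suppose the Q-matrix satisfies condition C1, the item parameter matrix Θ satisfies condition C2, and (Θ, p) and (Θ̄, p̄) are two parameter pairs each satisfying the model restrictions (R1) and (R2) with respect to Q. If P(R = r | Q, Θ, p) = P(R = r | Q, Θ̄, p̄) for every response vector r ∈ {0,1}^J, then Θ = Θ̄ and p = p̄ (i.e., the restricted latent class model parameters are identifiable). -/
open Finset

/-- `u ⪰ v`: componentwise domination of binary vectors. -/
def dominates {n : ℕ} (u v : Fin n → Bool) : Prop := ∀ i, v i = true → u i = true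

instance {n : ℕ} (u v : Fin n → Bool) : Decidable (dominates u v) :=
  inferInstanceAs (Decidable (∀ i, v i = true → u i = true))

/-- The all-zeros attribute profile. -/
def allZero (K : ℕ) : Fin K → Bool := fun _ => false

/-- The all-ones attribute profile. -/
def allOne (K : ℕ) : Fin K → Bool := fun _ => true

/-- The `k`-th standard basis attribute profile `e_k`. -/
def basis {K : ℕ} (k : Fin K) : Fin K → Bool := fun i => decide (i = k)

/-- `P(R = r | Q, Θ, p) = Σ_α p_α ∏_j θ_{j,α}^{r_j} (1-θ_{j,α})^{1-r_j}`. -/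
def respProb {J K : ℕ} (θ : Fin J → (Fin K → Bool) → ℝ) (p : (Fin K → Bool) → ℝ)
    (r : Fin J → Bool) : ℝ :=
  ∑ α : Fin K → Bool, p α * ∏ j, (if r j then θ j α else 1 - θ j α)

/-- The `(r, α)` entry of the T-matrix: `t_{r,α}(Θ) = ∏_{j : r_j = 1} θ_{j,α}`. -/
def tEntry {J K : ℕ} (θ : Fin J → (Fin K → Bool) → ℝ) (r : Fin J → Bool)
    (α : Fin K → Bool) : ℝ :=
  ∏ j, (if r j then θ j α else 1)

/-- The `r`-entry of the vector `T(Q,Θ) p`. -/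
def Tp {J K : ℕ} (θ : Fin J → (Fin K → Bool) → ℝ) (p : (Fin K → Bool) → ℝ)
    (r : Fin J → Bool) : ℝ :=
  ∑ α : Fin K → Bool, tEntry θ r α * p α

/-- All item parameters lie in the open unit interval. -/
def ThetaValid {J K : ℕ} (θ : Fin J → (Fin K → Bool) → ℝ) : Prop :=
  ∀ j α, θ j α ∈ Set.Ioo (0 : ℝ) 1

/-- A valid class distribution: every `p_α ∈ (0,1)` and `Σ_α p_α = 1`. -/
def PValid {K : ℕ} (p : (Fin K → Bool) → ℝ) : Prop :=
  (∀ α, p α ∈ Set.Ioo (0 : ℝ) 1) ∧ ∑ α : Fin K → Bool, p α = 1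

/-- Model restriction (R1) with respect to the Q-matrix `Q`. -/
def R1 {J K : ℕ} (Q : Fin J → Fin K → Bool) (θ : Fin J → (Fin K → Bool) → ℝ) : Prop :=
  ∀ j : Fin J,
    (∀ α α' : Fin K → Bool, dominates α (Q j) → dominates α' (Q j) → θ j α = θ j α') ∧
    (∀ αs α' : Fin K → Bool, dominates αs (Q j) → θ j α' ≤ θ j αs) ∧
    (∀ α' : Fin K → Bool, θ j (allZero K) ≤ θ j α')

/-- Model restriction (R2) with respect to the Q-matrix `Q`. -/
def R2 {J K : ℕ} (Q : Fin J → Fin K → Bool) (θ : Fin J → (Fin K → Bool) → ℝ) : Prop :=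
  ∀ (k : Fin K) (j : Fin J), Q j = basis k →
    ∀ α : Fin K → Bool, α k = false → θ j α < θ j (allOne K)

/-- Condition (C1): the first `2K` rows of `Q` form two copies of the identity. -/
def C1 {J K : ℕ} (Q : Fin J → Fin K → Bool) : Prop :=
  ∀ (k : Fin K) (h1 : (k : ℕ) < J) (h2 : K + (k : ℕ) < J),
    Q ⟨k, h1⟩ = basis k ∧ Q ⟨K + (k : ℕ), h2⟩ = basis k

/-- Condition (C2): for every `k`, `(θ_{j,e_k})_{j > 2K} ≠ (θ_{j,0})_{j > 2K}`. -/
def C2 {J K : ℕ} (θ : Fin J → (Fin K → Bool) → ℝ) : Prop :=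
  ∀ k : Fin K, ∃ j : Fin J, 2 * K ≤ (j : ℕ) ∧ θ j (basis k) ≠ θ j (allZero K)


/-- All shifted product moments agree. -/
def MomEq {J K : ℕ} (θ θb : Fin J → (Fin K → Bool) → ℝ) (p pb : (Fin K → Bool) → ℝ) : Prop :=
  ∀ (S : Finset (Fin J)) (c : Fin J → ℝ),
    ∑ α, p α * ∏ j ∈ S, (θ j α - c j) = ∑ α, pb α * ∏ j ∈ S, (θb j α - c j)

/-- The items `a k` behave as single-attribute items. -/
def TopItem {J K : ℕ} (θ : Fin J → (Fin K → Bool) → ℝ) (a : Fin K → Fin J) : Prop :=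
  ∀ k α, (α k = true → θ (a k) α = θ (a k) (allOne K)) ∧
    (α k = false → θ (a k) α < θ (a k) (allOne K))

lemma MomEq.symm {J K : ℕ} {θ θb : Fin J → (Fin K → Bool) → ℝ} {p pb : (Fin K → Bool) → ℝ}
    (h : MomEq θ θb p pb) : MomEq θb θ pb p := fun S c => (h S c).symm

lemma momExpand {J K : ℕ} (θ : Fin J → (Fin K → Bool) → ℝ) (p : (Fin K → Bool) → ℝ)
    (S : Finset (Fin J)) (c : Fin J → ℝ) :
    ∑ α, p α * ∏ j ∈ S, (θ j α - c j) =
      ∑ r : Fin J → Bool, (∏ j, (if j ∈ S then (if r j then 1 - c j else - c j) else 1)) *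
        respProb θ p r := by
  unfold respProb
  simp_rw [Finset.mul_sum]
  rw [Finset.sum_comm]
  refine Finset.sum_congr rfl fun α _ => ?_
  have h1 : ∏ j ∈ S, (θ j α - c j) = ∏ j, ∑ b : Bool,
      ((if j ∈ S then (if b then 1 - c j else - c j) else 1) *
        (if b then θ j α else 1 - θ j α)) := by
    rw [← Finset.prod_subset (Finset.subset_univ S)]
    · refine Finset.prod_congr rfl fun j hj => ?_
      simp [hj]
      ring
    · intro j _ hj
      simp [hj]
  rw [h1, Finset.prod_univ_sum, Finset.mul_sum, Fintype.piFinset_univ]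
  refine Finset.sum_congr rfl fun r _ => ?_
  rw [Finset.prod_mul_distrib]
  ring

lemma momEq_of {J K : ℕ} {θ θb : Fin J → (Fin K → Bool) → ℝ} {p pb : (Fin K → Bool) → ℝ}
    (heq : ∀ r : Fin J → Bool, respProb θ p r = respProb θb pb r) : MomEq θ θb p pb := by
  intro S c
  rw [momExpand, momExpand]
  simp_rw [heq]

lemma sumkey {K : ℕ} (y yb : (Fin K → Bool) → ℝ) (α : Fin K → Bool)
    (hs : ∑ β, y β = ∑ β, yb β) (h0 : ∀ β, ¬ β ≤ α → y β = 0) (h0b : ∀ β, ¬ β ≤ α → yb β = 0)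
    (hlt : ∀ β, β < α → y β = yb β) : y α = yb α := by
  have h : ∀ β ∈ (univ : Finset (Fin K → Bool)), β ≠ α → y β - yb β = 0 := by
    intro β _ hne
    by_cases hle : β ≤ α
    · rw [hlt β (lt_of_le_of_ne hle hne), sub_self]
    · rw [h0 β hle, h0b β hle, sub_self]
  have h2 := Finset.sum_eq_single α h (by simp)
  rw [Finset.sum_sub_distrib, hs, sub_self] at h2
  linarith

/-- Items `b k` with `k` outside of `α`. -/
def offItems {J K : ℕ} (b : Fin K → Fin J) (α : Fin K → Bool) : Finset (Fin J) :=
  (univ.filter fun k => α k = false).image b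

lemma off_zero {J K : ℕ} {θ : Fin J → (Fin K → Bool) → ℝ} {b : Fin K → Fin J}
    (ht : TopItem θ b) {α β : Fin K → Bool} (h : ¬ β ≤ α) :
    ∏ j ∈ offItems b α, (θ j β - θ j (allOne K)) = 0 := by
  rw [Pi.le_def] at h
  push Not at h
  obtain ⟨k, hk⟩ := h
  have h1 : α k = false ∧ β k = true := by
    revert hk; cases α k <;> cases β k <;> simp
  refine Finset.prod_eq_zero (i := b k) ?_ ?_
  · exact Finset.mem_image_of_mem _ (by simp [h1.1])
  · rw [(ht k β).1 h1.2, sub_self]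

lemma off_ne {J K : ℕ} {θ : Fin J → (Fin K → Bool) → ℝ} {b : Fin K → Fin J}
    (ht : TopItem θ b) (α : Fin K → Bool) :
    ∏ j ∈ offItems b α, (θ j α - θ j (allOne K)) ≠ 0 := by
  rw [Finset.prod_ne_zero_iff]
  intro j hj
  obtain ⟨k, hk, rfl⟩ := Finset.mem_image.1 hj
  have := (ht k α).2 (by simpa using hk)
  linarith

lemma relation {J K : ℕ} {θ θb : Fin J → (Fin K → Bool) → ℝ} {p pb : (Fin K → Bool) → ℝ}
    (hm : MomEq θ θb p pb) (hpb : ∀ α, 0 < pb α) {b : Fin K → Fin J} (htb : TopItem θb b)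
    (S : Finset (Fin J)) (hS : ∀ k, b k ∉ S) (c : Fin J → ℝ)
    (hz : ∀ α, ∏ j ∈ S, (θ j α - c j) = 0) (α : Fin K → Bool) :
    ∏ j ∈ S, (θb j α - c j) = 0 := by
  induction α using WellFoundedLT.induction with
  | _ α ih =>
  have hdis : Disjoint S (offItems b α) := by
    rw [Finset.disjoint_right]
    intro j hj
    obtain ⟨k, _, rfl⟩ := Finset.mem_image.1 hj
    exact hS k
  have hsplit : ∀ (t : Fin J → (Fin K → Bool) → ℝ) (β : Fin K → Bool),
      ∏ j ∈ S ∪ offItems b α, (t j β - (if j ∈ S then c j else θb j (allOne K))) =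
      (∏ j ∈ S, (t j β - c j)) * ∏ j ∈ offItems b α, (t j β - θb j (allOne K)) := by
    intro t β
    rw [Finset.prod_union hdis]
    congr 1
    · exact Finset.prod_congr rfl fun j hj => by simp [hj]
    · exact Finset.prod_congr rfl fun j hj => by simp [Finset.disjoint_right.1 hdis hj]
  have h := hm (S ∪ offItems b α) (fun j => if j ∈ S then c j else θb j (allOne K))
  simp only [hsplit, hz, zero_mul, mul_zero] at h
  have h2 := sumkey _ _ α h (fun _ _ => rfl)
    (fun β hβ => by rw [off_zero htb hβ]; simp) (fun β hβ => by rw [ih β hβ]; simp)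
  have h3 := off_ne htb α
  have h4 := (hpb α).ne'
  simpa [h3, h4] using h2.symm

lemma allZero_le {K : ℕ} (k : Fin K) : allZero K k = false := rfl

lemma top_eq {J K : ℕ} {θ θb : Fin J → (Fin K → Bool) → ℝ} {p pb : (Fin K → Bool) → ℝ}
    (hm : MomEq θ θb p pb) (hp : ∀ α, 0 < p α) (hpb : ∀ α, 0 < pb α) {a b : Fin K → Fin J}
    (ha : Function.Injective a) (hab : ∀ k l, a k ≠ b l)
    (hta : TopItem θ a) (htab : TopItem θb a) (htb : TopItem θ b) (htbb : TopItem θb b)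
    (hC2 : ∀ k : Fin K, ∃ j : Fin J, (∀ l, a l ≠ j) ∧ (∀ l, b l ≠ j) ∧
      θ j (basis k) ≠ θ j (allZero K)) (k : Fin K) :
    θ (a k) (allOne K) = θb (a k) (allOne K) := by
  -- products over `insert j (image a T)`
  have hprod : ∀ (j : Fin J) (_ : ∀ l, a l ≠ j) (T : Finset (Fin K)) (c : Fin J → ℝ) (d : ℝ)
      (t : Fin J → (Fin K → Bool) → ℝ) (β : Fin K → Bool),
      ∏ i ∈ insert j (T.image a), (t i β - (if i = j then d else c i)) =
        (t j β - d) * ∏ l ∈ T, (t (a l) β - c (a l)) := by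
    intro j hj T c d t β
    rw [Finset.prod_insert (by simp [hj]), Finset.prod_image (fun x _ y _ h => ha h)]
    simp [hj]
  have rel1 : ∀ (j : Fin J) (_ : ∀ l, a l ≠ j) (_ : ∀ l, b l ≠ j) (T : Finset (Fin K))
      (c : Fin J → ℝ) (d : ℝ), (∀ β, (θ j β - d) * ∏ l ∈ T, (θ (a l) β - c (a l)) = 0) →
      ∀ β, (θb j β - d) * ∏ l ∈ T, (θb (a l) β - c (a l)) = 0 := by
    intro j hj hj' T c d h β
    rw [← hprod j hj]
    refine relation hm hpb htbb _ ?_ _ ?_ β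
    · intro l; simp [hj', hab]
    · intro β; rw [hprod j hj]; exact h β
  have rel2 : ∀ (j : Fin J) (_ : ∀ l, a l ≠ j) (_ : ∀ l, b l ≠ j) (T : Finset (Fin K))
      (c : Fin J → ℝ) (d : ℝ), (∀ β, (θb j β - d) * ∏ l ∈ T, (θb (a l) β - c (a l)) = 0) →
      ∀ β, (θ j β - d) * ∏ l ∈ T, (θ (a l) β - c (a l)) = 0 := by
    intro j hj hj' T c d h β
    rw [← hprod j hj]
    refine relation hm.symm hp htb _ ?_ _ ?_ β
    · intro l; simp [hj', hab]
    · intro β; rw [hprod j hj]; exact h β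
  -- the base relation
  have base : ∀ (t : Fin J → (Fin K → Bool) → ℝ) (_ : TopItem t a) (j : Fin J) (β : Fin K → Bool),
      (t j β - t j (allZero K)) * ∏ l, (t (a l) β - t (a l) (allOne K)) = 0 := by
    intro t ht j β
    by_cases h : ∃ l, β l = true
    · obtain ⟨l, hl⟩ := h
      rw [Finset.prod_eq_zero (Finset.mem_univ l), mul_zero]
      rw [(ht l β).1 hl, sub_self]
    · push Not at h
      have : β = allZero K := by
        funext l; simpa [allZero] using h l
      rw [this, sub_self, zero_mul]
  have hle : ∀ k, θ (a k) (allOne K) ≤ θb (a k) (allOne K) := by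
    intro k
    by_contra hlt
    push Not at hlt
    obtain ⟨j, hja, hjb, hj⟩ := hC2 k
    have h1 := rel1 j hja hjb univ (fun i => θ i (allOne K)) _ (base θ hta j)
    have h2 : ∀ β, (θb j β - θ j (allZero K)) *
        ∏ l ∈ univ.erase k, (θb (a l) β - θ (a l) (allOne K)) = 0 := by
      intro β
      have h3 := h1 β
      rw [← Finset.mul_prod_erase univ _ (Finset.mem_univ k)] at h3
      have h4 : θb (a k) β - θ (a k) (allOne K) ≠ 0 := by
        have : θb (a k) β ≤ θb (a k) (allOne K) := by
          cases hb : β k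
          · exact ((htab k β).2 hb).le
          · exact ((htab k β).1 hb).le
        linarith
      rw [mul_left_comm] at h3
      exact (mul_eq_zero.1 h3).resolve_left h4
    have h5 := rel2 j hja hjb (univ.erase k) (fun i => θ i (allOne K)) _ h2 (basis k)
    rcases mul_eq_zero.1 h5 with h | h
    · exact hj (by linarith)
    · obtain ⟨l, hl, h⟩ := Finset.prod_eq_zero_iff.1 h
      have := (hta l (basis k)).2 (by simpa [basis] using hl)
      linarith
  obtain ⟨j, hja, hjb, hj⟩ := hC2 k
  have h1 := rel2 j hja hjb univ (fun i => θb i (allOne K)) _ (base θb htab j)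
  have h0 : θ j (allZero K) = θb j (allZero K) := by
    rcases mul_eq_zero.1 (h1 (allZero K)) with h | h
    · linarith
    · obtain ⟨l, hl, h⟩ := Finset.prod_eq_zero_iff.1 h
      have := (hta l (allZero K)).2 rfl
      have := hle l
      linarith
  rcases mul_eq_zero.1 (h1 (basis k)) with h | h
  · exact absurd (by linarith) hj
  · obtain ⟨l, hl, h⟩ := Finset.prod_eq_zero_iff.1 h
    have h3 := hle l
    by_cases hlk : l = k
    · subst hlk
      have := (hta l (basis l)).1 (by simp [basis])
      linarith
    · have := (hta l (basis k)).2 (by simp [basis, hlk])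
      linarith

/-- One step of the final induction: all items outside of `offItems b α`. -/
lemma step {J K : ℕ} {θ θb : Fin J → (Fin K → Bool) → ℝ} {p pb : (Fin K → Bool) → ℝ}
    (hm : MomEq θ θb p pb) (hp : ∀ α, 0 < p α) {b : Fin K → Fin J}
    (htb : TopItem θ b) (htbb : TopItem θb b)
    (htop : ∀ k, θ (b k) (allOne K) = θb (b k) (allOne K)) (α : Fin K → Bool)
    (ih : ∀ β < α, (∀ j, θ j β = θb j β) ∧ p β = pb β) :
    p α * ∏ j ∈ offItems b α, (θ j α - θ j (allOne K)) =
      pb α * ∏ j ∈ offItems b α, (θb j α - θb j (allOne K)) ∧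
    ∀ j, j ∉ offItems b α → θ j α = θb j α := by
  have htop' : ∀ j ∈ offItems b α, θ j (allOne K) = θb j (allOne K) := by
    intro j hj
    obtain ⟨k, _, rfl⟩ := Finset.mem_image.1 hj
    exact htop k
  have hc : ∀ β, ∏ j ∈ offItems b α, (θ j β - θ j (allOne K)) =
      ∏ j ∈ offItems b α, (θ j β - θb j (allOne K)) := fun β =>
    Finset.prod_congr rfl fun j hj => by rw [htop' j hj]
  have h1 : p α * ∏ j ∈ offItems b α, (θ j α - θ j (allOne K)) =
      pb α * ∏ j ∈ offItems b α, (θb j α - θb j (allOne K)) := by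
    have h := hm (offItems b α) (fun j => θb j (allOne K))
    simp only [← hc] at h
    refine sumkey _ _ α h (fun β hβ => ?_) (fun β hβ => ?_) (fun β hβ => ?_)
    · rw [off_zero htb hβ, mul_zero]
    · rw [off_zero htbb hβ, mul_zero]
    · rw [(ih β hβ).2, hc]; simp only [(ih β hβ).1]
  refine ⟨h1, fun i hi => ?_⟩
  have hsplit : ∀ (t : Fin J → (Fin K → Bool) → ℝ) (β : Fin K → Bool),
      ∏ j ∈ insert i (offItems b α), (t j β - (if j = i then 0 else θb j (allOne K))) =
      t i β * ∏ j ∈ offItems b α, (t j β - θb j (allOne K)) := by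
    intro t β
    rw [Finset.prod_insert hi]
    congr 1
    · simp
    · refine Finset.prod_congr rfl fun j hj => ?_
      have : j ≠ i := fun h => hi (h ▸ hj)
      simp [this]
  have h2 : p α * (θ i α * ∏ j ∈ offItems b α, (θ j α - θ j (allOne K))) =
      pb α * (θb i α * ∏ j ∈ offItems b α, (θb j α - θb j (allOne K))) := by
    have h := hm (insert i (offItems b α)) (fun j => if j = i then 0 else θb j (allOne K))
    simp only [hsplit, ← hc] at h
    refine sumkey _ _ α h (fun β hβ => ?_) (fun β hβ => ?_) (fun β hβ => ?_)
    · rw [off_zero htb hβ, mul_zero, mul_zero]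
    · rw [off_zero htbb hβ, mul_zero, mul_zero]
    · rw [(ih β hβ).2, hc]; simp only [(ih β hβ).1]
  rw [mul_left_comm, mul_left_comm (pb α), ← h1] at h2
  exact mul_right_cancel₀ (mul_ne_zero (hp α).ne' (off_ne htb α)) h2

lemma topItem_of {J K : ℕ} {Q : Fin J → Fin K → Bool} {θ : Fin J → (Fin K → Bool) → ℝ}
    (hR1 : R1 Q θ) (hR2 : R2 Q θ) {a : Fin K → Fin J} (ha : ∀ k, Q (a k) = basis k) :
    TopItem θ a := by
  intro k α
  refine ⟨fun h => (hR1 (a k)).1 _ _ ?_ ?_, fun h => hR2 k (a k) (ha k) α h⟩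
  · intro i hi
    rw [ha k] at hi
    have : i = k := by simpa [basis] using hi
    rw [this, h]
  · intro i _
    rfl

/-- **Theorem 1.** Under conditions (C1) and (C2), the restricted latent class model
parameters `(Θ, p)` are identifiable. -/
theorem identifiability_of_restricted_latent_class_models
    {J K : ℕ} (hJ : 2 * K ≤ J) (Q : Fin J → Fin K → Bool)
    (θ θb : Fin J → (Fin K → Bool) → ℝ) (p pb : (Fin K → Bool) → ℝ)
    (hθ : ThetaValid θ) (hθb : ThetaValid θb) (hp : PValid p) (hpb : PValid pb)
    (hR1 : R1 Q θ) (hR1b : R1 Q θb) (hR2 : R2 Q θ) (hR2b : R2 Q θb)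
    (hC1 : C1 Q) (hC2 : C2 θ)
    (heq : ∀ r : Fin J → Bool, respProb θ p r = respProb θb pb r) :
    θ = θb ∧ p = pb := by
  have hm : MomEq θ θb p pb := momEq_of heq
  have hp' : ∀ α, 0 < p α := fun α => (hp.1 α).1
  have hpb' : ∀ α, 0 < pb α := fun α => (hpb.1 α).1
  let a : Fin K → Fin J := fun k => ⟨k, by omega⟩
  let b : Fin K → Fin J := fun k => ⟨K + k, by omega⟩
  have ha : Function.Injective a := by
    intro x y h
    have : (x : ℕ) = y := by simpa [a] using h
    exact Fin.ext this
  have hb : Function.Injective b := by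
    intro x y h
    have : (x : ℕ) = y := by simpa [b] using h
    exact Fin.ext this
  have hab : ∀ k l, a k ≠ b l := by
    intro k l h
    have : (k : ℕ) = K + l := by simpa [a, b] using h
    omega
  have hQa : ∀ k, Q (a k) = basis k := fun k => (hC1 k (by omega) (by omega)).1
  have hQb : ∀ k, Q (b k) = basis k := fun k => (hC1 k (by omega) (by omega)).2
  have hta := topItem_of hR1 hR2 hQa
  have htab := topItem_of hR1b hR2b hQa
  have htb := topItem_of hR1 hR2 hQb
  have htbb := topItem_of hR1b hR2b hQb
  have hC : ∀ k : Fin K, ∃ j : Fin J, (∀ l, a l ≠ j) ∧ (∀ l, b l ≠ j) ∧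
      θ j (basis k) ≠ θ j (allZero K) := by
    intro k
    obtain ⟨j, hj, hne⟩ := hC2 k
    refine ⟨j, fun l h => ?_, fun l h => ?_, hne⟩
    · have : (l : ℕ) = j := by rw [← h]
      omega
    · have : K + (l : ℕ) = j := by rw [← h]
      omega
  have hC' : ∀ k : Fin K, ∃ j : Fin J, (∀ l, b l ≠ j) ∧ (∀ l, a l ≠ j) ∧
      θ j (basis k) ≠ θ j (allZero K) := by
    intro k
    obtain ⟨j, h1, h2, h3⟩ := hC k
    exact ⟨j, h2, h1, h3⟩
  have topa := top_eq hm hp' hpb' ha hab hta htab htb htbb hC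
  have topb := top_eq hm hp' hpb' hb (fun k l => (hab l k).symm) htb htbb hta htab hC'
  have main : ∀ α, (∀ j, θ j α = θb j α) ∧ p α = pb α := by
    intro α
    induction α using WellFoundedLT.induction with
    | _ α ih =>
    have s1 := step hm hp' htb htbb topb α ih
    have s2 := step hm hp' hta htab topa α ih
    have hθeq : ∀ j, θ j α = θb j α := by
      intro j
      by_cases hj : j ∈ offItems b α
      · refine s2.2 j fun hj' => ?_
        obtain ⟨k, _, hk⟩ := Finset.mem_image.1 hj
        obtain ⟨l, _, hl⟩ := Finset.mem_image.1 hj'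
        exact hab l k (hl.trans hk.symm)
      · exact s1.2 j hj
    refine ⟨hθeq, ?_⟩
    have h := s1.1
    have h2 : ∏ j ∈ offItems b α, (θ j α - θ j (allOne K)) =
        ∏ j ∈ offItems b α, (θb j α - θb j (allOne K)) := by
      refine Finset.prod_congr rfl fun j hj => ?_
      obtain ⟨k, _, rfl⟩ := Finset.mem_image.1 hj
      rw [hθeq, topb k]
    rw [← h2] at h
    exact mul_right_cancel₀ (off_ne htb α) h
  exact ⟨funext fun j => funext fun α => (main α).1 j, funext fun α => (main α).2⟩
end

section
/- (Step 3 of the proof of Theorem 1.) Under the standing hypotheses, for every item j ∈ {1, …, 2K} and every k ∈ {1, …, K}: θ_{j,0} = θ̄_{j,0} and θ_{j,e_k} = θ̄_{j,e_k}; moreover, p_0 = p̄_0 and p_{e_k} = p̄_{e_k} for every k ∈ {1, …, K}. -/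
open Finset

/-- Expectation identity for products of affine functions of distinct items. -/
lemma affine_identity {J K : ℕ} (θ θb : Fin J → (Fin K → Bool) → ℝ)
    (p pb : (Fin K → Bool) → ℝ)
    (hT : ∀ r : Fin J → Bool, Tp θ p r = Tp θb pb r) (s t : Fin J → ℝ) :
    ∑ α, p α * ∏ j, (s j * θ j α - t j) = ∑ α, pb α * ∏ j, (s j * θb j α - t j) := by
  have key : ∀ (η : Fin J → (Fin K → Bool) → ℝ) (q : (Fin K → Bool) → ℝ),
      ∑ α, q α * ∏ j, (s j * η j α - t j) =
      ∑ S ∈ (univ : Finset (Fin J)).powerset,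
        ((∏ j ∈ S, s j) * ∏ j ∈ univ \ S, (- t j)) * Tp η q (fun j => decide (j ∈ S)) := by
    intro η q
    simp only [sub_eq_add_neg, Finset.prod_add, Finset.mul_sum, Tp]
    rw [Finset.sum_comm]
    refine Finset.sum_congr rfl fun S _ => Finset.sum_congr rfl fun α _ => ?_
    have : tEntry η (fun j => decide (j ∈ S)) α = ∏ j ∈ S, η j α := by
      simp [tEntry, Finset.prod_ite_mem]
    rw [this, Finset.prod_mul_distrib]
    ring
  rw [key, key]
  exact Finset.sum_congr rfl fun S _ => by rw [hT]

lemma affine_identity_inj {J K : ℕ} (θ θb : Fin J → (Fin K → Bool) → ℝ)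
    (p pb : (Fin K → Bool) → ℝ)
    (hT : ∀ r : Fin J → Bool, Tp θ p r = Tp θb pb r) {ι : Type} [Fintype ι]
    (w : ι → Fin J) (hw : Function.Injective w) (s t : ι → ℝ) :
    ∑ α, p α * ∏ i, (s i * θ (w i) α - t i) = ∑ α, pb α * ∏ i, (s i * θb (w i) α - t i) := by
  have h := affine_identity θ θb p pb hT (Function.extend w s (fun _ => 0))
    (Function.extend w t (fun _ => -1))
  have key : ∀ (η : Fin J → (Fin K → Bool) → ℝ) (α : Fin K → Bool),
      ∏ i, (s i * η (w i) α - t i) = ∏ j, (Function.extend w s (fun _ => 0) j * η j α -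
        Function.extend w t (fun _ => -1) j) := by
    intro η α
    refine Fintype.prod_of_injective w hw _ _ ?_ ?_
    · intro j hj
      rw [Function.extend_apply' _ _ _ (by simpa using hj),
        Function.extend_apply' _ _ _ (by simpa using hj)]
      ring
    · intro i
      rw [hw.extend_apply, hw.extend_apply]
  simp only [key]
  exact h

/-- Identity of mixed moments for two groups of items. -/
def Ident {K : ℕ} (A B : Fin K → (Fin K → Bool) → ℝ) (p : (Fin K → Bool) → ℝ)
    (A' B' : Fin K → (Fin K → Bool) → ℝ) (p' : (Fin K → Bool) → ℝ) : Prop :=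
  ∀ s t s' t' : Fin K → ℝ,
    ∑ α, p α * ((∏ k, (s k * A k α - t k)) * ∏ k, (s' k * B k α - t' k)) =
    ∑ α, p' α * ((∏ k, (s k * A' k α - t k)) * ∏ k, (s' k * B' k α - t' k))

def IdentC {K : ℕ} (A B : Fin K → (Fin K → Bool) → ℝ) (c p : (Fin K → Bool) → ℝ)
    (A' B' : Fin K → (Fin K → Bool) → ℝ) (c' p' : (Fin K → Bool) → ℝ) : Prop :=
  ∀ (s t s' t' : Fin K → ℝ) (y : ℝ),
    ∑ α, p α * (((∏ k, (s k * A k α - t k)) * ∏ k, (s' k * B k α - t' k)) * (c α - y)) =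
    ∑ α, p' α * (((∏ k, (s k * A' k α - t k)) * ∏ k, (s' k * B' k α - t' k)) * (c' α - y))

def Good {K : ℕ} (A : Fin K → (Fin K → Bool) → ℝ) : Prop :=
  (∀ k α, α k = true → A k α = A k (allOne K)) ∧
  (∀ k α, α k = false → A k α < A k (allOne K)) ∧
  (∀ k α, A k (allZero K) ≤ A k α)

lemma Ident.swap {K : ℕ} {A B A' B' : Fin K → (Fin K → Bool) → ℝ} {p p' : (Fin K → Bool) → ℝ}
    (h : Ident A B p A' B' p') : Ident B A p B' A' p' := by
  intro s t s' t'
  have := h s' t' s t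
  simp only [mul_comm (∏ k, (s k * B _ _ - t k)), mul_comm (∏ k, (s k * B' _ _ - t k))]
  exact this

lemma IdentC.swap {K : ℕ} {A B A' B' : Fin K → (Fin K → Bool) → ℝ}
    {c c' p p' : (Fin K → Bool) → ℝ}
    (h : IdentC A B c p A' B' c' p') : IdentC B A c p B' A' c' p' := by
  intro s t s' t' y
  have := h s' t' s t y
  simp only [mul_comm (∏ k, (s k * B _ _ - t k)), mul_comm (∏ k, (s k * B' _ _ - t k))]
  exact this

lemma Ident.symm {K : ℕ} {A B A' B' : Fin K → (Fin K → Bool) → ℝ} {p p' : (Fin K → Bool) → ℝ}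
    (h : Ident A B p A' B' p') : Ident A' B' p' A B p :=
  fun s t s' t' => (h s t s' t').symm

lemma prod_pick {K : ℕ} (A : Fin K → (Fin K → Bool) → ℝ) (l : Fin K) (α : Fin K → Bool) :
    ∏ k, ((if k = l then 1 else 0) * A k α - (if k = l then 0 else -1)) = A l α := by
  rw [Finset.prod_eq_single l]
  · simp
  · intro b _ hb; simp [hb]
  · simp

lemma prod_triv {K : ℕ} (A : Fin K → (Fin K → Bool) → ℝ) (α : Fin K → Bool) :
    ∏ k, ((0 : ℝ) * A k α - (-1)) = 1 := by
  simp

lemma zero_lt_top {K : ℕ} {A B A' B' : Fin K → (Fin K → Bool) → ℝ} {p p' : (Fin K → Bool) → ℝ}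
    (h : Ident A B p A' B' p') (hA : Good A) (hA' : Good A') (hp : PValid p) (hp' : PValid p')
    (k : Fin K) : A k (allZero K) < A' k (allOne K) := by
  have h1 := h (fun i => if i = k then 1 else 0) (fun i => if i = k then 0 else -1)
    (fun _ => 0) (fun _ => -1)
  simp only [prod_pick, prod_triv, mul_one] at h1
  have h2 : A k (allZero K) < ∑ α, p α * A k α := by
    calc A k (allZero K) = ∑ α, p α * A k (allZero K) := by rw [← Finset.sum_mul, hp.2, one_mul]
      _ < _ := by
        refine Finset.sum_lt_sum (fun α _ => ?_) ⟨allOne K, mem_univ _, ?_⟩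
        · exact mul_le_mul_of_nonneg_left (hA.2.2 k α) (hp.1 α).1.le
        · exact mul_lt_mul_of_pos_left (hA.2.1 k _ rfl) (hp.1 _).1
  have h3 : ∑ α, p' α * A' k α ≤ A' k (allOne K) := by
    calc _ ≤ ∑ α, p' α * A' k (allOne K) := by
          refine Finset.sum_le_sum (fun α _ => ?_)
          refine mul_le_mul_of_nonneg_left ?_ (hp'.1 α).1.le
          cases hα : α k
          · exact (hA'.2.1 k α hα).le
          · exact (hA'.1 k α hα).le
      _ = _ := by rw [← Finset.sum_mul, hp'.2, one_mul]
  linarith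

lemma exists_true {K : ℕ} {α : Fin K → Bool} (h : α ≠ allZero K) : ∃ k, α k = true := by
  by_contra hc
  push Not at hc
  exact h (funext fun k => by simpa [allZero] using hc k)

lemma basis_self {K : ℕ} (k : Fin K) : basis k k = true := by simp [basis]

lemma basis_ne {K : ℕ} {k m : Fin K} (h : m ≠ k) : basis k m = false := by simp [basis, h]

/-- The product of deviations from the top vanishes away from the zero profile. -/
lemma topprod_zero {K : ℕ} {A : Fin K → (Fin K → Bool) → ℝ} (hA : Good A)
    {α : Fin K → Bool} (h : α ≠ allZero K) : ∏ k, (1 * A k α - A k (allOne K)) = 0 := by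
  obtain ⟨k, hk⟩ := exists_true h
  exact Finset.prod_eq_zero (mem_univ k) (by rw [hA.1 k α hk]; ring)

lemma basprod_zero {K : ℕ} {A : Fin K → (Fin K → Bool) → ℝ} (hA : Good A) (k : Fin K)
    {α : Fin K → Bool} (h : α ≠ basis k) :
    ∏ m, (1 * A m α - (if m = k then A m (allZero K) else A m (allOne K))) = 0 := by
  by_cases hm : ∃ m, m ≠ k ∧ α m = true
  · obtain ⟨m, hmk, hm⟩ := hm
    exact Finset.prod_eq_zero (mem_univ m) (by rw [if_neg hmk, hA.1 m α hm]; ring)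
  · push Not at hm
    have h0 : α = allZero K := by
      funext m
      by_cases hmk : m = k
      · subst hmk
        cases hα : α m
        · rfl
        · exfalso
          apply h
          funext i
          by_cases hi : i = m
          · subst hi; rw [hα, basis_self]
          · rw [basis_ne hi]; simpa using hm i hi
      · simpa [allZero] using hm m hmk
    exact Finset.prod_eq_zero (mem_univ k) (by rw [if_pos rfl, h0]; ring)

lemma basprod_ne {K : ℕ} {A : Fin K → (Fin K → Bool) → ℝ} (hA : Good A) (k : Fin K) :
    ∏ m, (1 * A m (basis k) - (if m = k then A m (allZero K) else A m (allOne K))) ≠ 0 := by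
  refine Finset.prod_ne_zero_iff.2 fun m _ => ?_
  split_ifs with hm
  · subst hm
    rw [hA.1 m _ (basis_self m)]
    have := hA.2.1 m (allZero K) rfl
    intro h; linarith
  · have := hA.2.1 m _ (basis_ne hm)
    intro h; linarith

lemma crossprod_ne {K : ℕ} {A A' : Fin K → (Fin K → Bool) → ℝ}
    (h : ∀ k, A k (allZero K) < A' k (allOne K)) :
    ∏ k, (1 * A k (allZero K) - A' k (allOne K)) ≠ 0 := by
  refine Finset.prod_ne_zero_iff.2 fun m _ => ?_
  have := h m
  intro h; linarith

lemma good_zero_lt {K : ℕ} {A : Fin K → (Fin K → Bool) → ℝ} (hA : Good A) (k : Fin K) :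
    A k (allZero K) < A k (allOne K) := hA.2.1 k _ rfl

lemma c_zero_eq {K : ℕ} {A B A' B' : Fin K → (Fin K → Bool) → ℝ} {c c' p p' : (Fin K → Bool) → ℝ}
    (h : Ident A B p A' B' p') (hc : IdentC A B c p A' B' c' p')
    (hB : Good B) (hA' : Good A') (hB' : Good B')
    (hp : PValid p) (hp' : PValid p') : c' (allZero K) = c (allZero K) := by
  have h1 := hc (fun _ => 1) (fun k => A' k (allOne K)) (fun _ => 1) (fun k => B k (allOne K))
    (c (allZero K))
  rw [Finset.sum_eq_single (allZero K)
      (fun α _ hα => by rw [topprod_zero hB hα]; ring) (by simp),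
    Finset.sum_eq_single (allZero K)
      (fun α _ hα => by rw [topprod_zero hA' hα]; ring) (by simp)] at h1
  have hn1 := crossprod_ne (good_zero_lt hA')
  have hn2 := crossprod_ne (zero_lt_top h.symm.swap hB' hB hp' hp)
  have hn3 : p' (allZero K) ≠ 0 := (hp'.1 _).1.ne'
  rw [sub_self, mul_zero, mul_zero, eq_comm] at h1
  have := (mul_eq_zero.1 h1).resolve_left hn3
  have := (mul_eq_zero.1 this).resolve_left (mul_ne_zero hn1 hn2)
  linarith

lemma B_zero_eq {K : ℕ} {A B A' B' : Fin K → (Fin K → Bool) → ℝ} {c c' p p' : (Fin K → Bool) → ℝ}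
    (h : Ident A B p A' B' p') (hc : IdentC A B c p A' B' c' p')
    (hB : Good B) (hA' : Good A') (hB' : Good B')
    (hp : PValid p) (hp' : PValid p') (k : Fin K) (hck : c (basis k) ≠ c (allZero K)) :
    B' k (allZero K) = B k (allZero K) := by
  have h0 := c_zero_eq h hc hB hA' hB' hp hp'
  have h1 := hc (fun _ => 1) (fun k => A' k (allOne K)) (fun _ => 1)
    (fun m => if m = k then B m (allZero K) else B m (allOne K)) (c (allZero K))
  have h2 := h (fun _ => 1) (fun k => A' k (allOne K)) (fun _ => 1)
    (fun m => if m = k then B m (allZero K) else B m (allOne K))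
  rw [Finset.sum_eq_single (basis k)
      (fun α _ hα => by rw [basprod_zero hB k hα]; ring) (by simp),
    Finset.sum_eq_single (allZero K)
      (fun α _ hα => by rw [topprod_zero hA' hα]; ring) (by simp)] at h1 h2
  have hn1 := crossprod_ne (good_zero_lt hA')
  have hn2 := basprod_ne hB k
  have hn3 : p' (allZero K) ≠ 0 := (hp'.1 _).1.ne'
  rw [h0, sub_self, mul_zero, mul_zero, ← mul_assoc] at h1
  have h3 := (mul_eq_zero.1 h1).resolve_right (sub_ne_zero.2 hck)
  rw [h3, eq_comm] at h2
  have h4 := (mul_eq_zero.1 h2).resolve_left hn3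
  have h5 := (mul_eq_zero.1 h4).resolve_left hn1
  obtain ⟨m, _, hm⟩ := Finset.prod_eq_zero_iff.1 h5
  split_ifs at hm with hmk
  · subst hmk; linarith
  · have := zero_lt_top h.symm.swap hB' hB hp' hp m
    linarith

lemma cross_vanish {K : ℕ} {A B A' B' : Fin K → (Fin K → Bool) → ℝ} {p p' : (Fin K → Bool) → ℝ}
    (h : Ident A B p A' B' p') (hB : Good B) (hA' : Good A')
    (hp : PValid p) (hB0 : ∀ k, B' k (allZero K) = B k (allZero K)) :
    ∀ (n : ℕ) (α : Fin K → Bool), (univ.filter fun k => α k = true).card = n → α ≠ allZero K →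
      ∏ k, (1 * A k α - A' k (allOne K)) = 0 := by
  intro n
  induction n using Nat.strong_induction_on with
  | _ n ih =>
  intro α hn hα
  obtain ⟨m, hm⟩ := exists_true hα
  have h1 := h (fun _ => 1) (fun k => A' k (allOne K)) (fun k => if α k = true ∧ k ≠ m then 0 else 1)
    (fun k => if k = m then B k (allZero K) else if α k = true then -1 else B k (allOne K))
  rw [Finset.sum_eq_single α ?_ (by simp),
    Finset.sum_eq_single (allZero K)
      (fun α _ hα => by rw [topprod_zero hA' hα]; ring) (by simp)] at h1
  · have h2 : ∏ k, ((if α k = true ∧ k ≠ m then 0 else 1) * B' k (allZero K) -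
        (if k = m then B k (allZero K) else if α k = true then -1 else B k (allOne K))) = 0 :=
      Finset.prod_eq_zero (mem_univ m) (by simp [hB0])
    rw [h2, mul_zero, mul_zero] at h1
    have h3 := (mul_eq_zero.1 h1).resolve_left (hp.1 _).1.ne'
    refine (mul_eq_zero.1 h3).resolve_right ?_
    refine Finset.prod_ne_zero_iff.2 fun k _ => ?_
    by_cases hk : k = m
    · subst hk
      have := good_zero_lt hB k
      have := hB.1 k α hm
      simp
      intro h; linarith
    · cases hαk : α k
      · have := hB.2.1 k α hαk
        simp [hk]
        intro h; linarith
      · simp [hk]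
  · intro β _ hβα
    by_cases hβ0 : β = allZero K
    · have : ∏ k, ((if α k = true ∧ k ≠ m then 0 else 1) * B k β -
        (if k = m then B k (allZero K) else if α k = true then -1 else B k (allOne K))) = 0 :=
        Finset.prod_eq_zero (mem_univ m) (by simp [hβ0])
      rw [this]; ring
    · by_cases hsub : ∃ k, β k = true ∧ α k = false
      · obtain ⟨k, hk1, hk2⟩ := hsub
        have hkm : k ≠ m := by rintro rfl; simp [hm] at hk2
        have : ∏ k, ((if α k = true ∧ k ≠ m then 0 else 1) * B k β -
          (if k = m then B k (allZero K) else if α k = true then -1 else B k (allOne K))) = 0 :=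
          Finset.prod_eq_zero (mem_univ k) (by simp [hkm, hk2, hB.1 k β hk1])
        rw [this]; ring
      · push Not at hsub
        have hlt : (univ.filter fun k => β k = true).card < n := by
          rw [← hn]
          refine Finset.card_lt_card ⟨?_, ?_⟩
          · intro k hk
            simp only [mem_filter, mem_univ, true_and] at hk ⊢
            simpa using hsub k hk
          · intro hss
            apply hβα
            funext k
            have h1 := hsub k
            have h2 : α k = true → β k = true := fun hk => by
              simpa using hss (by simpa using hk : k ∈ univ.filter fun k => α k = true)
            cases hb : β k <;> cases ha : α k <;> simp_all
        rw [ih _ hlt β rfl hβ0]; ring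

lemma top_eq_s9 {K : ℕ} {A B A' B' : Fin K → (Fin K → Bool) → ℝ} {p p' : (Fin K → Bool) → ℝ}
    (h : Ident A B p A' B' p') (hA : Good A) (hB : Good B) (hA' : Good A')
    (hp : PValid p) (hB0 : ∀ k, B' k (allZero K) = B k (allZero K)) (k : Fin K) :
    A k (allOne K) = A' k (allOne K) := by
  by_contra hk
  have h1 := cross_vanish h hB hA' hp hB0 _
    (fun k => decide (A k (allOne K) ≠ A' k (allOne K))) rfl
    (fun h => by have := congrFun h k; simp [allZero, hk] at this)
  obtain ⟨m, _, hm⟩ := Finset.prod_eq_zero_iff.1 h1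
  by_cases hmt : A m (allOne K) = A' m (allOne K)
  · have := hA.2.1 m (fun k => decide (A k (allOne K) ≠ A' k (allOne K))) (by simp [hmt])
    linarith
  · have := hA.1 m (fun k => decide (A k (allOne K) ≠ A' k (allOne K))) (by simp [hmt])
    apply hmt
    linarith

lemma basis_eq {K : ℕ} {A B A' B' : Fin K → (Fin K → Bool) → ℝ} {p p' : (Fin K → Bool) → ℝ}
    (h : Ident A B p A' B' p') (hB : Good B) (hB' : Good B') (hp : PValid p)
    (hB0 : ∀ k, B' k (allZero K) = B k (allZero K))
    (hB1 : ∀ k, B k (allOne K) = B' k (allOne K)) (k l : Fin K) :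
    A l (basis k) = A' l (basis k) := by
  have hz : ∀ α, α ≠ basis k →
      ∏ m, (1 * B' m α - (if m = k then B m (allZero K) else B m (allOne K))) = 0 := by
    intro α hα
    have := basprod_zero hB' k hα
    simpa only [hB0, hB1] using this
  have h1 := h (fun i => if i = l then 1 else 0) (fun i => if i = l then 0 else -1)
    (fun _ => 1) (fun m => if m = k then B m (allZero K) else B m (allOne K))
  have h2 := h (fun _ => 0) (fun _ => -1)
    (fun _ => 1) (fun m => if m = k then B m (allZero K) else B m (allOne K))
  simp only [prod_pick] at h1
  simp only [prod_triv] at h2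
  rw [Finset.sum_eq_single (basis k)
      (fun α _ hα => by rw [basprod_zero hB k hα]; ring) (by simp),
    Finset.sum_eq_single (basis k)
      (fun α _ hα => by rw [hz α hα]; ring) (by simp)] at h1 h2
  have hn : p (basis k) * ∏ m, (1 * B m (basis k) -
      (if m = k then B m (allZero K) else B m (allOne K))) ≠ 0 :=
    mul_ne_zero (hp.1 _).1.ne' (basprod_ne hB k)
  apply mul_left_cancel₀ hn
  rw [one_mul] at h2
  rw [one_mul] at h2
  calc _ = _ := by ring
    _ = _ := h1
    _ = _ := by rw [h2]; ring

lemma p_basis_eq {K : ℕ} {A B A' B' : Fin K → (Fin K → Bool) → ℝ} {p p' : (Fin K → Bool) → ℝ}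
    (h : Ident A B p A' B' p') (hB : Good B) (hB' : Good B')
    (hB0 : ∀ k, B' k (allZero K) = B k (allZero K))
    (hB1 : ∀ k, B k (allOne K) = B' k (allOne K)) (k : Fin K)
    (hBk : ∀ l, B l (basis k) = B' l (basis k)) :
    p (basis k) = p' (basis k) := by
  have hz : ∀ α, α ≠ basis k →
      ∏ m, (1 * B' m α - (if m = k then B m (allZero K) else B m (allOne K))) = 0 := by
    intro α hα
    have := basprod_zero hB' k hα
    simpa only [hB0, hB1] using this
  have h2 := h (fun _ => 0) (fun _ => -1)
    (fun _ => 1) (fun m => if m = k then B m (allZero K) else B m (allOne K))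
  simp only [prod_triv] at h2
  rw [Finset.sum_eq_single (basis k)
      (fun α _ hα => by rw [basprod_zero hB k hα]; ring) (by simp),
    Finset.sum_eq_single (basis k)
      (fun α _ hα => by rw [hz α hα]; ring) (by simp)] at h2
  have hn := basprod_ne hB k
  simp only [← hBk] at h2
  rw [one_mul] at h2
  exact mul_right_cancel₀ hn h2

lemma p_zero_eq {K : ℕ} {A B A' B' : Fin K → (Fin K → Bool) → ℝ} {p p' : (Fin K → Bool) → ℝ}
    (h : Ident A B p A' B' p') (hB : Good B) (hB' : Good B')
    (hB0 : ∀ k, B' k (allZero K) = B k (allZero K))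
    (hB1 : ∀ k, B k (allOne K) = B' k (allOne K)) :
    p (allZero K) = p' (allZero K) := by
  have hz : ∀ α, α ≠ allZero K → ∏ m, (1 * B' m α - B m (allOne K)) = 0 := by
    intro α hα
    have := topprod_zero hB' hα
    simpa only [hB1] using this
  have h2 := h (fun _ => 0) (fun _ => -1) (fun _ => 1) (fun m => B m (allOne K))
  simp only [prod_triv] at h2
  rw [Finset.sum_eq_single (allZero K)
      (fun α _ hα => by rw [topprod_zero hB hα]; ring) (by simp),
    Finset.sum_eq_single (allZero K)
      (fun α _ hα => by rw [hz α hα]; ring) (by simp)] at h2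
  have hn := crossprod_ne (good_zero_lt hB)
  simp only [hB0] at h2
  rw [one_mul] at h2
  exact mul_right_cancel₀ hn h2

lemma good_of {J K : ℕ} {Q : Fin J → Fin K → Bool} {θ : Fin J → (Fin K → Bool) → ℝ}
    (hR1 : R1 Q θ) (hR2 : R2 Q θ) (u : Fin K → Fin J) (hu : ∀ k, Q (u k) = basis k) :
    Good (fun k => θ (u k)) := by
  refine ⟨fun k α hα => ?_, fun k α hα => hR2 k (u k) (hu k) α hα, fun k α => (hR1 (u k)).2.2 α⟩
  refine (hR1 (u k)).1 α _ ?_ ?_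
  · intro i hi
    rw [hu] at hi
    have : i = k := by simpa [basis] using hi
    rw [this]; exact hα
  · intro i _; rfl

/-- **Step 3.** Under the standing hypotheses, `θ_{j,0} = θ̄_{j,0}` and
`θ_{j,e_k} = θ̄_{j,e_k}` for the first `2K` items, and `p_0 = p̄_0`,
`p_{e_k} = p̄_{e_k}`. -/
theorem step3_first_items_and_p_eq
    {J K : ℕ} (hJ : 2 * K ≤ J) (Q : Fin J → Fin K → Bool)
    (θ θb : Fin J → (Fin K → Bool) → ℝ) (p pb : (Fin K → Bool) → ℝ)
    (hθ : ThetaValid θ) (hθb : ThetaValid θb) (hp : PValid p) (hpb : PValid pb)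
    (hR1 : R1 Q θ) (hR1b : R1 Q θb) (hR2 : R2 Q θ) (hR2b : R2 Q θb)
    (hC1 : C1 Q) (hC2 : C2 θ)
    (hT : ∀ r : Fin J → Bool, Tp θ p r = Tp θb pb r) :
    (∀ j : Fin J, (j : ℕ) < 2 * K →
      θ j (allZero K) = θb j (allZero K) ∧
      ∀ k : Fin K, θ j (basis k) = θb j (basis k)) ∧
    p (allZero K) = pb (allZero K) ∧
    (∀ k : Fin K, p (basis k) = pb (basis k)) := by
  set u : Fin K → Fin J := fun k => ⟨k, by omega⟩ with hu
  set v : Fin K → Fin J := fun k => ⟨K + k, by omega⟩ with hv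
  have hQu : ∀ k, Q (u k) = basis k := fun k => (hC1 k (by omega) (by omega)).1
  have hQv : ∀ k, Q (v k) = basis k := fun k => (hC1 k (by omega) (by omega)).2
  have gA := good_of hR1 hR2 u hQu
  have gB := good_of hR1 hR2 v hQv
  have gA' := good_of hR1b hR2b u hQu
  have gB' := good_of hR1b hR2b v hQv
  have hinj : Function.Injective (Sum.elim u v) := by
    rintro (a | a) (b | b) hab <;>
      simp only [Sum.elim_inl, Sum.elim_inr, hu, hv, Fin.mk.injEq] at hab
    · rw [Fin.ext hab]
    · omega
    · omega
    · rw [Fin.ext (by omega : (a : ℕ) = b)]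
  have hI : Ident (fun k => θ (u k)) (fun k => θ (v k)) p
      (fun k => θb (u k)) (fun k => θb (v k)) pb := by
    intro s t s' t'
    have := affine_identity_inj θ θb p pb hT (Sum.elim u v) hinj (Sum.elim s s') (Sum.elim t t')
    simpa only [Fintype.prod_sum_type, Sum.elim_inl, Sum.elim_inr] using this
  have hIC : ∀ j : Fin J, 2 * K ≤ (j : ℕ) →
      IdentC (fun k => θ (u k)) (fun k => θ (v k)) (θ j) p
      (fun k => θb (u k)) (fun k => θb (v k)) (θb j) pb := by
    intro j hj s t s' t' y
    have hinj2 : Function.Injective (Sum.elim (Sum.elim u v) (fun _ : Unit => j)) := by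
      refine hinj.sumElim (fun _ _ _ => rfl) ?_
      rintro (a | a) _ hab <;>
        simp only [Sum.elim_inl, Sum.elim_inr, hu, hv] at hab <;>
        have := congrArg Fin.val hab <;> simp at this <;> omega
    have := affine_identity_inj θ θb p pb hT (Sum.elim (Sum.elim u v) (fun _ : Unit => j)) hinj2
      (Sum.elim (Sum.elim s s') (fun _ => 1)) (Sum.elim (Sum.elim t t') (fun _ => y))
    simpa only [Fintype.prod_sum_type, Sum.elim_inl, Sum.elim_inr, Finset.univ_unique,
      Finset.prod_singleton, one_mul] using this
  have hB0 : ∀ k, θb (v k) (allZero K) = θ (v k) (allZero K) := by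
    intro k
    obtain ⟨j, hj, hjk⟩ := hC2 k
    exact B_zero_eq hI (hIC j hj) gB gA' gB' hp hpb k hjk
  have hA0 : ∀ k, θb (u k) (allZero K) = θ (u k) (allZero K) := by
    intro k
    obtain ⟨j, hj, hjk⟩ := hC2 k
    exact B_zero_eq hI.swap (hIC j hj).swap gA gB' gA' hp hpb k hjk
  have hA1 := top_eq_s9 hI gA gB gA' hp hB0
  have hB1 := top_eq_s9 hI.swap gB gA gB' hp hA0
  have hAk := basis_eq hI gB gB' hp hB0 hB1
  have hBk := basis_eq hI.swap gA gA' hp hA0 hA1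
  refine ⟨fun j hj => ?_, p_zero_eq hI gB gB' hB0 hB1,
    fun k => p_basis_eq hI gB gB' hB0 hB1 k (hBk k)⟩
  by_cases hjK : (j : ℕ) < K
  · have : j = u ⟨j, hjK⟩ := rfl
    rw [this]
    exact ⟨(hA0 _).symm, fun k => hAk k _⟩
  · have : j = v ⟨j - K, by omega⟩ := Fin.ext (by simp [hv]; omega)
    rw [this]
    exact ⟨(hB0 _).symm, fun k => hBk k _⟩
end

section
/- (Step 5 of the proof of Theorem 1.) Under the standing hypotheses, for every attribute profile α ∈ {0,1}^K having at least three coordinates equal to 1 (i.e., α = e_{h_1} + ⋯ + e_{h_k} for distinct h_1, …, h_k with 3 ≤ k ≤ K) and every item j ∈ {1, …, J}: θ_{j,α} = θ̄_{j,α}, and moreover p_α = p̄_α. -/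
open Finset

namespace Step5

/-- Items of a block loading on single attributes: item `l` equals `g l` on profiles that contain
`l` and is smaller on the others. Profiles are represented as finsets. -/
def Blk {κ : Type*} (x : κ → Finset κ → ℝ) (g : κ → ℝ) : Prop :=
  ∀ l s, (l ∈ s → x l s = g l) ∧ (l ∉ s → x l s < g l)

section core
variable {κ ζ : Type*} [Fintype κ] [DecidableEq κ]

/-- Equality of all shifted moments of the two models. -/
def MEq (p : Finset κ → ℝ) (x y : κ → Finset κ → ℝ) (z : ζ → Finset κ → ℝ)
    (p' : Finset κ → ℝ) (x' y' : κ → Finset κ → ℝ) (z' : ζ → Finset κ → ℝ) : Prop :=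
  ∀ (S T : Finset κ) (R : Finset ζ) (a b : κ → ℝ) (c : ζ → ℝ),
    ∑ s, p s * ((∏ l ∈ S, (x l s - a l)) * ((∏ l ∈ T, (y l s - b l)) * ∏ j ∈ R, (z j s - c j)))
    = ∑ s, p' s * ((∏ l ∈ S, (x' l s - a l)) *
        ((∏ l ∈ T, (y' l s - b l)) * ∏ j ∈ R, (z' j s - c j)))

lemma blk_ne {x : κ → Finset κ → ℝ} {g : κ → ℝ} (hx : Blk x g) {S s : Finset κ}
    (h : ∀ l ∈ S, l ∉ s) : ∏ l ∈ S, (x l s - g l) ≠ 0 := by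
  rw [Finset.prod_ne_zero_iff]
  intro l hl
  have := (hx l s).2 (h l hl)
  linarith

lemma blk_zero {x : κ → Finset κ → ℝ} {g : κ → ℝ} (hx : Blk x g) {S s : Finset κ}
    {l : κ} (hl : l ∈ S) (hs : l ∈ s) : ∏ l ∈ S, (x l s - g l) = 0 :=
  Finset.prod_eq_zero hl (by rw [(hx l s).1 hs, sub_self])

lemma tri {y : κ → Finset κ → ℝ} {g : κ → ℝ} (hy : Blk y g) (u : Finset κ → ℝ)
    (h : ∀ T : Finset κ, ∑ s, u s * ∏ l ∈ T, (y l s - g l) = 0) : ∀ s, u s = 0 := by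
  intro s
  induction s using Finset.strongInduction with
  | H s ih =>
    have h1 := h sᶜ
    rw [Finset.sum_eq_single s] at h1
    · exact (mul_eq_zero.1 h1).resolve_right (blk_ne hy (by simp))
    · intro t _ hts
      by_cases hsub : t ⊆ s
      · rw [ih t (hsub.ssubset_of_ne hts), zero_mul]
      · obtain ⟨l, hl, hl2⟩ := Finset.not_subset.1 hsub
        rw [blk_zero hy (by simpa using hl2) hl, mul_zero]
    · simp

/-- The test functions used in `stepH`. -/
def W (g : κ → ℝ) (k : κ) (c : ℝ) (x : κ → Finset κ → ℝ) (zj : Finset κ → ℝ) :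
    Option {S : Finset κ // k ∉ S} → Finset κ → ℝ
  | some S, s => ∏ l ∈ S.1, (x l s - g l)
  | none, s => (∏ l ∈ Finset.univ.erase k, (x l s - g l)) * (zj s - c)

lemma prod_upd (x : κ → Finset κ → ℝ) (g : κ → ℝ) (k : κ) (v : ℝ) (S : Finset κ) (hS : k ∉ S)
    (s : Finset κ) : ∏ l ∈ insert k S, (x l s - Function.update g k v l)
      = (x k s - v) * ∏ l ∈ S, (x l s - g l) := by
  rw [Finset.prod_insert hS, Function.update_self]
  congr 1
  apply Finset.prod_congr rfl
  intro l hl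
  rw [Function.update_of_ne]
  rintro rfl; exact hS hl

lemma stepH {p p' : Finset κ → ℝ} {x y x' y' : κ → Finset κ → ℝ} {z z' : ζ → Finset κ → ℝ}
    {g g' h : κ → ℝ} (hM : MEq p x y z p' x' y' z') (hp : ∀ s, 0 < p s)
    (hx : Blk x g) (hx' : Blk x' g') (hy : Blk y h) (k : κ) (j : ζ)
    (hj : z j {k} ≠ z j ∅) : g' k ≤ g k := by
  by_contra hlt
  push Not at hlt
  let M : Matrix {S : Finset κ // k ∉ S} (Option {S : Finset κ // k ∉ S}) ℝ :=
    fun t o => W g k (z j ∅) x' (z' j) o t.1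
  have hker : LinearMap.ker M.mulVecLin ≠ ⊥ := by
    apply LinearMap.ker_ne_bot_of_finrank_lt
    simp
  obtain ⟨c, hc, hc0⟩ := (Submodule.ne_bot_iff _).1 hker
  have hc1 : ∀ t : Finset κ, k ∉ t → ∑ o, c o * W g k (z j ∅) x' (z' j) o t = 0 := by
    intro t ht
    have := congrFun (LinearMap.mem_ker.1 hc) ⟨t, ht⟩
    simp only [Matrix.mulVecLin_apply, Matrix.mulVec, dotProduct, Pi.zero_apply] at this
    rw [← this]
    exact Finset.sum_congr rfl fun o _ => mul_comm _ _
  have hmom : ∀ (o) (T : Finset κ),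
      ∑ s, p s * ((x k s - g' k) * W g k (z j ∅) x (z j) o s * ∏ l ∈ T, (y l s - h l))
      = ∑ s, p' s * ((x' k s - g' k) * W g k (z j ∅) x' (z' j) o s
          * ∏ l ∈ T, (y' l s - h l)) := by
    intro o T
    cases o with
    | some S =>
      have := hM (insert k S.1) T ∅ (Function.update g k (g' k)) h 0
      simp only [prod_upd _ _ _ _ _ S.2, Finset.prod_empty, mul_one] at this
      exact this
    | none =>
      have := hM (insert k (Finset.univ.erase k)) T {j} (Function.update g k (g' k)) h
        (fun _ => z j ∅)
      simp only [prod_upd _ _ _ _ _ (Finset.notMem_erase k _), Finset.prod_singleton] at this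
      simp only [W]
      convert this using 2 <;> ring
  have hφ : ∀ s, p s * (x k s - g' k) * ∑ o, c o * W g k (z j ∅) x (z j) o s = 0 := by
    apply tri hy
    intro T
    have e1 : ∑ s, p s * (x k s - g' k) * (∑ o, c o * W g k (z j ∅) x (z j) o s)
          * ∏ l ∈ T, (y l s - h l)
        = ∑ o, c o * ∑ s, p s * ((x k s - g' k) * W g k (z j ∅) x (z j) o s
          * ∏ l ∈ T, (y l s - h l)) := by
      simp only [Finset.mul_sum, Finset.sum_mul]
      rw [Finset.sum_comm]
      exact Finset.sum_congr rfl fun _ _ => Finset.sum_congr rfl fun _ _ => by ring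
    have e2 : ∑ s, p' s * (x' k s - g' k) * (∑ o, c o * W g k (z j ∅) x' (z' j) o s)
          * ∏ l ∈ T, (y' l s - h l)
        = ∑ o, c o * ∑ s, p' s * ((x' k s - g' k) * W g k (z j ∅) x' (z' j) o s
          * ∏ l ∈ T, (y' l s - h l)) := by
      simp only [Finset.mul_sum, Finset.sum_mul]
      rw [Finset.sum_comm]
      exact Finset.sum_congr rfl fun _ _ => Finset.sum_congr rfl fun _ _ => by ring
    rw [e1]
    simp only [hmom]
    rw [← e2]
    apply Finset.sum_eq_zero
    intro s _
    by_cases hks : k ∈ s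
    · rw [(hx' k s).1 hks]; ring
    · rw [hc1 s hks]; ring
  have hφ0 : ∀ s, ∑ o, c o * W g k (z j ∅) x (z j) o s = 0 := by
    intro s
    refine (mul_eq_zero.1 (hφ s)).resolve_left (mul_ne_zero (hp s).ne' ?_)
    have : x k s ≤ g k := by
      by_cases hks : k ∈ s
      · exact ((hx k s).1 hks).le
      · exact ((hx k s).2 hks).le
    linarith
  simp only [Fintype.sum_option, W] at hφ0
  have hz : ∀ l : κ, l ≠ k → ∀ s : Finset κ, l ∈ s →
      ∏ l ∈ Finset.univ.erase k, (x l s - g l) = 0 := fun l hl s hs =>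
    blk_zero hx (Finset.mem_erase.2 ⟨hl, Finset.mem_univ _⟩) hs
  have hcS : ∀ S : Finset κ, ∀ hS : k ∉ S, (∃ l, l ≠ k ∧ l ∉ S) → c (some ⟨S, hS⟩) = 0 := by
    intro S
    induction S using Finset.strongInduction with
    | H S ih =>
      intro hS ⟨l, hlk, hlS⟩
      have h1 := hφ0 Sᶜ
      rw [hz l hlk _ (by simpa using hlS), zero_mul, mul_zero, zero_add,
        Finset.sum_eq_single ⟨S, hS⟩] at h1
      · exact (mul_eq_zero.1 h1).resolve_right (blk_ne hx (by simp))
      · intro S' _ hne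
        by_cases hsub : S'.1 ⊆ S
        · rw [ih S'.1 (hsub.ssubset_of_ne fun e => hne (Subtype.ext e)) S'.2
            ⟨l, hlk, fun hh => hlS (hsub hh)⟩, zero_mul]
        · obtain ⟨m, hm, hm2⟩ := Finset.not_subset.1 hsub
          rw [blk_zero hx hm (by simpa using hm2), mul_zero]
      · simp
  have hfull : ∀ S : {S : Finset κ // k ∉ S}, S ≠ ⟨Finset.univ.erase k, by simp⟩ →
      c (some S) = 0 := by
    intro S hne
    apply hcS S.1 S.2
    by_contra hcon
    push Not at hcon
    apply hne
    apply Subtype.ext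
    ext l
    simp only [Finset.mem_erase, Finset.mem_univ, and_true]
    exact ⟨fun hl e => S.2 (e ▸ hl), hcon l⟩
  have h2 : c (some ⟨Finset.univ.erase k, by simp⟩) = 0 := by
    have h1 := hφ0 ∅
    rw [sub_self, mul_zero, mul_zero, zero_add,
      Finset.sum_eq_single ⟨Finset.univ.erase k, by simp⟩] at h1
    · exact (mul_eq_zero.1 h1).resolve_right (blk_ne hx (by simp))
    · intro S _ hne
      rw [hfull S hne, zero_mul]
    · simp
  have hall : ∀ S, c (some S) = 0 := by
    intro S
    by_cases e : S = ⟨Finset.univ.erase k, by simp⟩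
    · rw [e, h2]
    · exact hfull S e
  have h3 : c none = 0 := by
    have h1 := hφ0 {k}
    simp only [hall, zero_mul, Finset.sum_const_zero, add_zero] at h1
    refine (mul_eq_zero.1 h1).resolve_right (mul_ne_zero (blk_ne hx (by simp)) ?_)
    exact sub_ne_zero.2 hj
  apply hc0
  funext o
  cases o with
  | none => exact h3
  | some S => exact hall S

lemma stepL {p p' : Finset κ → ℝ} {x y x' y' : κ → Finset κ → ℝ} {z z' : ζ → Finset κ → ℝ}
    {g g' h' : κ → ℝ} (hM : MEq p x y z p' x' y' z') (hp : ∀ s, 0 < p s) (hp' : ∀ s, 0 < p' s)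
    (hx : Blk x g) (hx' : Blk x' g') (hy' : Blk y' h') (hle : ∀ l, g' l ≤ g l) (k : κ) (j : ζ)
    (hj : z j {k} ≠ z j ∅) : g k = g' k := by
  by_contra hne
  have hlt : g' k < g k := lt_of_le_of_ne (hle k) (Ne.symm hne)
  have h1 : ∀ s, p' s * (∏ l, (x' l s - g l)) * (z' j s - z j ∅) = 0 := by
    apply tri hy'
    intro T
    have := hM Finset.univ T {j} g h' (fun _ => z j ∅)
    simp only [Finset.prod_singleton] at this
    have e : ∑ s, p' s * (∏ l, (x' l s - g l)) * (z' j s - z j ∅) * ∏ l ∈ T, (y' l s - h' l)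
      = ∑ s, p' s * ((∏ l, (x' l s - g l)) * ((∏ l ∈ T, (y' l s - h' l)) * (z' j s - z j ∅))) :=
      Finset.sum_congr rfl fun _ _ => by ring
    rw [e, ← this]
    apply Finset.sum_eq_zero
    intro s _
    rcases s.eq_empty_or_nonempty with rfl | ⟨l, hl⟩
    · ring
    · rw [blk_zero hx (Finset.mem_univ l) hl]; ring
  have h2 := hM (Finset.univ.erase k) ∅ {j} g 0 (fun _ => z j ∅)
  simp only [Finset.prod_singleton, Finset.prod_empty, one_mul] at h2
  have h3 : ∑ s, p' s * ((∏ l ∈ Finset.univ.erase k, (x' l s - g l)) * (z' j s - z j ∅)) = 0 := by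
    apply Finset.sum_eq_zero
    intro s _
    have hk : x' k s - g k ≠ 0 := by
      have : x' k s ≤ g' k := by
        by_cases hks : k ∈ s
        · exact ((hx' k s).1 hks).le
        · exact ((hx' k s).2 hks).le
      linarith
    have := h1 s
    rw [← Finset.mul_prod_erase Finset.univ _ (Finset.mem_univ k)] at this
    refine mul_left_cancel₀ hk ?_
    linear_combination this
  rw [h3, Finset.sum_eq_single {k}] at h2
  · exact absurd h2 (mul_ne_zero (hp _).ne' (mul_ne_zero (blk_ne hx (by simp)) (sub_ne_zero.2 hj)))
  · intro s _ hs
    by_cases hex : ∃ l ∈ s, l ≠ k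
    · obtain ⟨l, hl, hlk⟩ := hex
      rw [blk_zero hx (Finset.mem_erase.2 ⟨hlk, Finset.mem_univ _⟩) hl]; ring
    · push Not at hex
      have : s = ∅ := by
        rcases Finset.subset_singleton_iff.1 (fun l hl => Finset.mem_singleton.2 (hex l hl)
          : s ⊆ {k}) with h | h
        · exact h
        · exact absurd h hs
      subst this; ring
  · simp

lemma MEq.swap {p p' : Finset κ → ℝ} {x y x' y' : κ → Finset κ → ℝ} {z z' : ζ → Finset κ → ℝ}
    (hM : MEq p x y z p' x' y' z') : MEq p y x z p' y' x' z' := by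
  intro S T R a b c
  have := hM T S R b a c
  convert this using 2 <;> ring

lemma stepF {p p' : Finset κ → ℝ} {x y x' y' : κ → Finset κ → ℝ} {z z' : ζ → Finset κ → ℝ}
    {g : κ → ℝ} (hM : MEq p x y z p' x' y' z') (hp : ∀ s, 0 < p s)
    (hx : Blk x g) (hx' : Blk x' g) (s : Finset κ)
    (ih : ∀ t, t ⊂ s → (∀ l, x l t = x' l t) ∧ (∀ l, y l t = y' l t) ∧ (∀ j, z j t = z' j t) ∧
      p t = p' t) :
    p s * ∏ l ∈ sᶜ, (x l s - g l) = p' s * ∏ l ∈ sᶜ, (x' l s - g l) ∧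
    (∀ l, y l s = y' l s) ∧ (∀ j, z j s = z' j s) := by
  have key : ∀ (T : Finset κ) (R : Finset ζ),
      p s * ((∏ l ∈ sᶜ, (x l s - g l)) * ((∏ l ∈ T, y l s) * ∏ j ∈ R, z j s))
      = p' s * ((∏ l ∈ sᶜ, (x' l s - g l)) * ((∏ l ∈ T, y' l s) * ∏ j ∈ R, z' j s)) := by
    intro T R
    have h := hM sᶜ T R g 0 0
    simp only [Pi.zero_apply, sub_zero] at h
    rw [← Finset.add_sum_erase _ _ (Finset.mem_univ s),
      ← Finset.add_sum_erase _ _ (Finset.mem_univ s)] at h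
    refine add_right_cancel (h.trans ?_)
    congr 1
    symm
    apply Finset.sum_congr rfl
    intro t ht
    have hts := Finset.ne_of_mem_erase ht
    by_cases hsub : t ⊆ s
    · obtain ⟨h1, h2, h3, h4⟩ := ih t (hsub.ssubset_of_ne hts)
      simp only [h1, h2, h3, h4]
    · obtain ⟨l, hl, hl2⟩ := Finset.not_subset.1 hsub
      rw [blk_zero hx (by simpa using hl2) hl, blk_zero hx' (by simpa using hl2) hl]
      ring
  have h0 := key ∅ ∅
  simp only [Finset.prod_empty, mul_one] at h0
  have hne : p s * ∏ l ∈ sᶜ, (x l s - g l) ≠ 0 := mul_ne_zero (hp s).ne' (blk_ne hx (by simp))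
  refine ⟨h0, fun l => ?_, fun j => ?_⟩
  · have h1 := key {l} ∅
    simp only [Finset.prod_empty, mul_one, Finset.prod_singleton] at h1
    apply mul_left_cancel₀ hne
    linear_combination h1 - y' l s * h0
  · have h1 := key ∅ {j}
    simp only [Finset.prod_empty, one_mul, Finset.prod_singleton] at h1
    apply mul_left_cancel₀ hne
    linear_combination h1 - z' j s * h0

theorem core {p p' : Finset κ → ℝ} {x y x' y' : κ → Finset κ → ℝ} {z z' : ζ → Finset κ → ℝ}
    {g g' h h' : κ → ℝ} (hM : MEq p x y z p' x' y' z') (hp : ∀ s, 0 < p s) (hp' : ∀ s, 0 < p' s)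
    (hx : Blk x g) (hx' : Blk x' g') (hy : Blk y h) (hy' : Blk y' h')
    (hC : ∀ k, ∃ j, z j {k} ≠ z j ∅) (s : Finset κ) :
    (∀ l, x l s = x' l s) ∧ (∀ l, y l s = y' l s) ∧ (∀ j, z j s = z' j s) ∧ p s = p' s := by
  have hg : g = g' := by
    funext k
    obtain ⟨j, hj⟩ := hC k
    refine stepL hM hp hp' hx hx' hy' (fun l => ?_) k j hj
    obtain ⟨i, hi⟩ := hC l
    exact stepH hM hp hx hx' hy l i hi
  have hh : h = h' := by
    funext k
    obtain ⟨j, hj⟩ := hC k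
    refine stepL hM.swap hp hp' hy hy' hx' (fun l => ?_) k j hj
    obtain ⟨i, hi⟩ := hC l
    exact stepH hM.swap hp hy hy' hx l i hi
  subst hg hh
  induction s using Finset.strongInduction with
  | H s ih =>
    obtain ⟨h0, h1, h2⟩ := stepF hM hp hx hx' s ih
    obtain ⟨-, h3, -⟩ := stepF hM.swap hp hy hy' s fun t ht =>
      ⟨(ih t ht).2.1, (ih t ht).1, (ih t ht).2.2⟩
    refine ⟨h3, h1, h2, ?_⟩
    simp only [h3] at h0
    exact mul_right_cancel₀ (blk_ne hx' (by simp)) h0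

end core

/-- Shifted moments agree. -/
lemma moment {J K : ℕ} (θ θb : Fin J → (Fin K → Bool) → ℝ) (p pb : (Fin K → Bool) → ℝ)
    (hT : ∀ r : Fin J → Bool, Tp θ p r = Tp θb pb r) {ι : Type*} [DecidableEq ι]
    (e : ι → Fin J) (he : Function.Injective e) (s : Finset ι) (c : ι → ℝ) :
    ∑ α, p α * ∏ i ∈ s, (θ (e i) α - c i) = ∑ α, pb α * ∏ i ∈ s, (θb (e i) α - c i) := by
  have key : ∀ (θ : Fin J → (Fin K → Bool) → ℝ) (p : (Fin K → Bool) → ℝ),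
      ∑ α, p α * ∏ i ∈ s, (θ (e i) α - c i)
      = ∑ t ∈ s.powerset, Tp θ p (fun j => decide (j ∈ t.image e)) * ∏ i ∈ s \ t, (- c i) := by
    intro θ p
    have h1 : ∀ (t : Finset ι) α, tEntry θ (fun j => decide (j ∈ t.image e)) α
        = ∏ i ∈ t, θ (e i) α := by
      intro t α
      unfold tEntry
      simp only [decide_eq_true_eq]
      rw [Finset.prod_ite_mem, Finset.univ_inter, Finset.prod_image he.injOn]
    simp only [Tp, h1, sub_eq_add_neg, Finset.prod_add, Finset.mul_sum, Finset.sum_mul]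
    rw [Finset.sum_comm]
    exact Finset.sum_congr rfl fun _ _ => Finset.sum_congr rfl fun _ _ => by ring
  rw [key, key]
  simp only [hT]

/-- Profile attached to a finset. -/
def prof {K : ℕ} (s : Finset (Fin K)) : Fin K → Bool := fun i => decide (i ∈ s)

/-- Profiles are finsets. -/
def profEquiv (K : ℕ) : Finset (Fin K) ≃ (Fin K → Bool) where
  toFun := prof
  invFun α := Finset.univ.filter fun i => α i = true
  left_inv s := by ext; simp [prof]
  right_inv α := by funext i; simp [prof]

end Step5

/-- **Step 5.** Under the standing hypotheses, for every profile `α` with at least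
three coordinates equal to one, `θ_{j,α} = θ̄_{j,α}` for every item `j`, and
`p_α = p̄_α`. -/
theorem step5_higher_order_eq
    {J K : ℕ} (hJ : 2 * K ≤ J) (Q : Fin J → Fin K → Bool)
    (θ θb : Fin J → (Fin K → Bool) → ℝ) (p pb : (Fin K → Bool) → ℝ)
    (hθ : ThetaValid θ) (hθb : ThetaValid θb) (hp : PValid p) (hpb : PValid pb)
    (hR1 : R1 Q θ) (hR1b : R1 Q θb) (hR2 : R2 Q θ) (hR2b : R2 Q θb)
    (hC1 : C1 Q) (hC2 : C2 θ)
    (hT : ∀ r : Fin J → Bool, Tp θ p r = Tp θb pb r) :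
    ∀ α : Fin K → Bool, 3 ≤ (Finset.univ.filter fun i => α i = true).card →
      (∀ j : Fin J, θ j α = θb j α) ∧ p α = pb α := by
  have hblk : ∀ (e : Fin K → Fin J), (∀ k, Q (e k) = basis k) →
      ∀ (θ : Fin J → (Fin K → Bool) → ℝ), R1 Q θ → R2 Q θ →
      Step5.Blk (fun l s => θ (e l) (Step5.prof s)) (fun l => θ (e l) (allOne K)) := by
    intro e he θ h1 h2 l s
    refine ⟨fun hl => ?_, fun hl => ?_⟩
    · apply (h1 (e l)).1
      · rw [he]; intro i hi
        simp only [basis, decide_eq_true_eq] at hi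
        subst hi
        simpa [Step5.prof] using hl
      · intro i _; rfl
    · exact h2 l (e l) (he l) _ (by simpa [Step5.prof] using hl)
  let eA : Fin K → Fin J := fun k => ⟨k, by omega⟩
  let eB : Fin K → Fin J := fun k => ⟨K + k, by omega⟩
  let eC : {j : Fin J // 2 * K ≤ (j : ℕ)} → Fin J := fun j => j.1
  have hA : ∀ k, Q (eA k) = basis k := fun k => (hC1 k (by omega) (by omega)).1
  have hB : ∀ k, Q (eB k) = basis k := fun k => (hC1 k (by omega) (by omega)).2
  let e : Fin K ⊕ (Fin K ⊕ {j : Fin J // 2 * K ≤ (j : ℕ)}) → Fin J :=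
    Sum.elim eA (Sum.elim eB eC)
  have he : Function.Injective e := by
    rintro (a | a | a) (b | b | b) hab <;>
      simp only [e, eA, eB, eC, Sum.elim_inl, Sum.elim_inr, Fin.ext_iff] at hab
    · exact congrArg _ (Fin.ext hab)
    · omega
    · have := b.2; omega
    · omega
    · rw [show a = b from Fin.ext (by omega)]
    · have := b.2; omega
    · have := a.2; omega
    · have := a.2; omega
    · rw [show a = b from Subtype.ext (Fin.ext hab)]
  have hM : Step5.MEq (fun s => p (Step5.prof s)) (fun l s => θ (eA l) (Step5.prof s))
      (fun l s => θ (eB l) (Step5.prof s)) (fun l s => θ (eC l) (Step5.prof s))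
      (fun s => pb (Step5.prof s)) (fun l s => θb (eA l) (Step5.prof s))
      (fun l s => θb (eB l) (Step5.prof s)) (fun l s => θb (eC l) (Step5.prof s)) := by
    intro S T R a b c
    have h := Step5.moment θ θb p pb hT e he (S.disjSum (T.disjSum R))
      (Sum.elim a (Sum.elim b c))
    rw [← (Step5.profEquiv K).sum_comp, ← (Step5.profEquiv K).sum_comp] at h
    simp only [Finset.prod_disjSum, e, Sum.elim_inl, Sum.elim_inr] at h
    exact h
  have hempty : Step5.prof (∅ : Finset (Fin K)) = allZero K := by
    funext i; simp [Step5.prof, allZero]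
  have hsing : ∀ k : Fin K, Step5.prof {k} = basis k := by
    intro k; funext i; simp [Step5.prof, basis]
  intro α _
  obtain ⟨h1, h2, h3, h4⟩ := Step5.core hM (fun s => (hp.1 _).1) (fun s => (hpb.1 _).1)
    (hblk eA hA θ hR1 hR2) (hblk eA hA θb hR1b hR2b)
    (hblk eB hB θ hR1 hR2) (hblk eB hB θb hR1b hR2b)
    (fun k => by
      obtain ⟨j, hj, hne⟩ := hC2 k
      exact ⟨⟨j, hj⟩, by simpa only [hempty, hsing] using hne⟩)
    ((Step5.profEquiv K).symm α)
  have hα : Step5.prof ((Step5.profEquiv K).symm α) = α := (Step5.profEquiv K).apply_symm_apply α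
  simp only [hα] at h1 h2 h3 h4
  refine ⟨fun j => ?_, h4⟩
  by_cases hj1 : (j : ℕ) < K
  · exact h1 ⟨j, hj1⟩
  · by_cases hj2 : (j : ℕ) < 2 * K
    · have := h2 ⟨j - K, by omega⟩
      have hj : eB ⟨j - K, by omega⟩ = j := Fin.ext (by simp only [eB]; omega)
      rwa [hj] at this
    · exact h3 ⟨j, by omega⟩
end
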